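/- Let h ~ Exp(1), γ₀ > 0, and ζ ≥ 0 a fixed constant, with γ = h/(1/γ₀ + ζ). Then E[V(γ)] = ∫₀^{(log₂ e)²/2} exp(−(1/γ₀ + ζ)·(√(1/(1 − 2v/(log₂ e)²)) − 1)) dv. -/

import Mathlib

open MeasureTheory

/-!
The dispersion increases from `0` to `L² / 2` on `[0, ∞)`, so the layer cake formula expresses its
expectation as the integral over `(0, L² / 2)` of the tail of the signal-to-noise ratio at the
inverse of the dispersion. Dividing a standard exponential variable by `1 / γ₀ + ζ` makes that
quantity its rate, and the tail becomes the exponential in the integrand.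
-/

open Set ProbabilityTheory

/-- The channel dispersion of a real additive white Gaussian noise channel as a function of the
signal-to-noise ratio `x`. The factor `L` fixes the unit of information: `1` for nats, `log₂ e` for
bits. -/
noncomputable def dispersion (L x : ℝ) : ℝ := L ^ 2 / 2 * (1 - 1 / (x + 1) ^ 2)

/-- The signal-to-noise ratio at which `dispersion L` reaches the level `v`; meaningful only for
`v < L² / 2`. -/
noncomputable def dispersionThreshold (L v : ℝ) : ℝ := √(1 / (1 - 2 * v / L ^ 2)) - 1

section Dispersion

variable {L x v : ℝ}

theorem measurable_dispersion (L : ℝ) : Measurable (dispersion L) := by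
  unfold dispersion
  fun_prop

theorem dispersion_nonneg (hx : 0 ≤ x) : 0 ≤ dispersion L x := by
  have : 1 / (x + 1) ^ 2 ≤ 1 := div_le_one_of_le₀ (one_le_pow₀ (by linarith)) (sq_nonneg _)
  exact mul_nonneg (by positivity) (sub_nonneg.2 this)

theorem dispersion_le (L x : ℝ) : dispersion L x ≤ L ^ 2 / 2 :=
  mul_le_of_le_one_right (by positivity) (sub_le_self _ (by positivity))

theorem one_sub_two_mul_div_sq_pos (hL : L ≠ 0) (hv : v < L ^ 2 / 2) :
    0 < 1 - 2 * v / L ^ 2 := by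
  rw [sub_pos, div_lt_one (by positivity)]
  linarith

theorem dispersionThreshold_nonneg (hL : L ≠ 0) (hv₀ : 0 ≤ v) (hv : v < L ^ 2 / 2) :
    0 ≤ dispersionThreshold L v := by
  rw [dispersionThreshold, sub_nonneg, Real.one_le_sqrt,
    one_le_div (one_sub_two_mul_div_sq_pos hL hv)]
  exact sub_le_self _ (by positivity)

theorem le_dispersion_iff (hL : L ≠ 0) (hx : -1 < x) (hv : v < L ^ 2 / 2) :
    v ≤ dispersion L x ↔ dispersionThreshold L v ≤ x := by
  have hx' : 0 < x + 1 := by linarith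
  have hw := one_sub_two_mul_div_sq_pos hL hv
  calc v ≤ dispersion L x
      ↔ 1 / (x + 1) ^ 2 ≤ 1 - 2 * v / L ^ 2 := by
        rw [dispersion, ← div_le_iff₀' (by positivity), le_sub_comm, div_div_eq_mul_div,
          mul_comm v]
    _ ↔ 1 / (1 - 2 * v / L ^ 2) ≤ (x + 1) ^ 2 := one_div_le (by positivity) hw
    _ ↔ dispersionThreshold L v ≤ x := by
        rw [dispersionThreshold, sub_le_iff_le_add, Real.sqrt_le_left hx'.le]

end Dispersion

theorem integral_dispersion_eq_integral_measureReal_Ici {L : ℝ} (hL : L ≠ 0) (ν : Measure ℝ)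
    [IsFiniteMeasure ν] (hν : ∀ᵐ x ∂ν, 0 ≤ x) :
    ∫ x, dispersion L x ∂ν =
      ∫ v in Ioo 0 (L ^ 2 / 2), ν.real (Ici (dispersionThreshold L v)) := by
  have h_nonneg : 0 ≤ᵐ[ν] dispersion L := hν.mono fun _ => dispersion_nonneg
  have h_int : Integrable (dispersion L) ν :=
    .of_mem_Icc 0 (L ^ 2 / 2) (measurable_dispersion L).aemeasurable
      (hν.mono fun x hx => ⟨dispersion_nonneg hx, dispersion_le L x⟩)
  rw [h_int.integral_eq_integral_Ioc_meas_le h_nonneg (.of_forall (dispersion_le L)),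
    integral_Ioc_eq_integral_Ioo]
  refine setIntegral_congr_fun measurableSet_Ioo fun v hv => measureReal_congr ?_
  filter_upwards [hν] with x hx
  exact propext (le_dispersion_iff hL (by linarith) hv.2)

section Exponential

variable {r : ℝ}

theorem ae_nonneg_expMeasure (r : ℝ) : ∀ᵐ x ∂expMeasure r, 0 ≤ x := by
  have h_Iio : expMeasure r (Iio 0) = 0 :=
    (withDensity_apply _ measurableSet_Iio).trans (lintegral_exponentialPDF_of_nonpos le_rfl)
  exact (measure_eq_zero_iff_ae_notMem.1 h_Iio).mono fun _ => notMem_Iio.1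

instance nullSingletonClass_expMeasure (r : ℝ) : NullSingletonClass (expMeasure r) :=
  ⟨fun x => withDensity_absolutelyContinuous _ _ (measure_singleton x)⟩

theorem expMeasure_real_Ici (hr : 0 < r) {t : ℝ} (ht : 0 ≤ t) :
    (expMeasure r).real (Ici t) = Real.exp (-(r * t)) := by
  have := isProbabilityMeasure_expMeasure hr
  rw [← measureReal_congr Ioi_ae_eq_Ici, ← compl_Iic, probReal_compl_eq_one_sub measurableSet_Iic,
    ← cdf_eq_real, cdf_expMeasure_eq hr, if_pos ht, sub_sub_cancel]

variable {Ω : Type*} [MeasurableSpace Ω] {μ : Measure Ω} {X : Ω → ℝ}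

theorem hasLaw_expMeasure_of_cdf [IsProbabilityMeasure μ] (hX : AEMeasurable X μ) (hr : 0 < r)
    (hcdf : ∀ t, 0 ≤ t → μ {ω | X ω ≤ t} = ENNReal.ofReal (1 - Real.exp (-(r * t)))) :
    HasLaw X (expMeasure r) μ := by
  have := isProbabilityMeasure_expMeasure hr
  have := Measure.isProbabilityMeasure_map hX
  refine ⟨hX, Measure.ext_of_Iic _ _ fun t => ?_⟩
  rw [Measure.map_apply_of_aemeasurable hX measurableSet_Iic, ← ofReal_cdf, cdf_expMeasure_eq hr]
  split_ifs with ht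
  · exact hcdf t ht
  · have h_zero : μ {ω | X ω ≤ 0} = 0 := by simp [hcdf 0 le_rfl]
    rw [ENNReal.ofReal_zero]
    exact measure_mono_null (fun ω hω => le_trans hω (not_le.1 ht).le) h_zero

theorem hasLaw_div_const_expMeasure (hX : HasLaw X (expMeasure r) μ) (hr : 0 < r) {c : ℝ}
    (hc : 0 < c) : HasLaw (fun ω => X ω / c) (expMeasure (r * c)) μ := by
  have := isProbabilityMeasure_expMeasure hr
  have := hX.isProbabilityMeasure
  refine hasLaw_expMeasure_of_cdf (hX.aemeasurable.div_const c) (mul_pos hr hc) fun t ht => ?_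
  calc μ {ω | X ω / c ≤ t}
      = μ {ω | X ω ≤ t * c} := by simp only [div_le_iff₀ hc]
    _ = expMeasure r (Iic (t * c)) := hX.measure_eq measurableSet_Iic
    _ = ENNReal.ofReal (1 - Real.exp (-(r * c * t))) := by
      rw [← ofReal_cdf, cdf_expMeasure_eq hr, if_pos (by positivity), mul_assoc, mul_comm c]

end Exponential

theorem integral_dispersion_of_hasLaw_expMeasure {Ω : Type*} [MeasurableSpace Ω] {μ : Measure Ω}
    {γ : Ω → ℝ} {L r : ℝ} (hL : L ≠ 0) (hr : 0 < r) (hγ : HasLaw γ (expMeasure r) μ) :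
    ∫ ω, dispersion L (γ ω) ∂μ =
      ∫ v in Ioo 0 (L ^ 2 / 2), Real.exp (-r * dispersionThreshold L v) := by
  have := isProbabilityMeasure_expMeasure hr
  calc ∫ ω, dispersion L (γ ω) ∂μ
      = ∫ x, dispersion L x ∂expMeasure r :=
        hγ.integral_comp (measurable_dispersion L).aestronglyMeasurable
    _ = ∫ v in Ioo 0 (L ^ 2 / 2), (expMeasure r).real (Ici (dispersionThreshold L v)) :=
        integral_dispersion_eq_integral_measureReal_Ici hL _ (ae_nonneg_expMeasure r)
    _ = ∫ v in Ioo 0 (L ^ 2 / 2), Real.exp (-r * dispersionThreshold L v) :=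
        setIntegral_congr_fun measurableSet_Ioo fun v hv => by
          simp only [expMeasure_real_Ici hr (dispersionThreshold_nonneg hL hv.1.le hv.2), neg_mul]

theorem average_dispersion
    {Ω : Type*} [MeasureSpace Ω] (μ : Measure Ω) [IsProbabilityMeasure μ]
    (h : Ω → ℝ) (hmeas : Measurable h)
    (hCDF : ∀ t : ℝ, 0 ≤ t → μ {ω | h ω ≤ t} = ENNReal.ofReal (1 - Real.exp (-t)))
    (γ₀ ζ : ℝ) (hγ₀ : 0 < γ₀) (hζ : 0 ≤ ζ)
    (γ : Ω → ℝ) (hγ : ∀ ω, γ ω = h ω / (1 / γ₀ + ζ)) :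
    ∫ ω, ((Real.logb 2 (Real.exp 1)) ^ 2 / 2) * (1 - 1 / (γ ω + 1) ^ 2) ∂μ =
      ∫ v in Set.Ioo (0 : ℝ) ((Real.logb 2 (Real.exp 1)) ^ 2 / 2),
        Real.exp (-(1 / γ₀ + ζ) *
          (Real.sqrt (1 / (1 - 2 * v / (Real.logb 2 (Real.exp 1)) ^ 2)) - 1)) := by
  have hL : Real.logb 2 (Real.exp 1) ≠ 0 := (Real.logb_pos (by norm_num) (by simp)).ne'
  have hc : 0 < 1 / γ₀ + ζ := by positivity
  have hh : HasLaw h (expMeasure 1) μ :=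
    hasLaw_expMeasure_of_cdf hmeas.aemeasurable one_pos (by simpa only [one_mul] using hCDF)
  have hγ_law : HasLaw γ (expMeasure (1 / γ₀ + ζ)) μ := by
    simpa only [← hγ, one_mul] using hasLaw_div_const_expMeasure hh one_pos hc
  exact integral_dispersion_of_hasLaw_expMeasure hL hc hγ_law
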